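/- arXiv:1905.13602 — 2 statements merged into one kernel-verified Lean document; each statement's English description precedes it below -/
import Mathlib

section
/- For every natural number n and every x in the open interval (−1,1), −(1/(2π))·∫_{−1}^{1} ln|x−y| · Tₙ(y)/√(1−y²) dy = σₙ·Tₙ(x), where σ₀ = ln(2)/2 and σₙ = 1/(2n) for n ≥ 1. -/
open Real Set MeasureTheory intervalIntegral

/-- The `n`-th Chebyshev polynomial of the first kind, as a real function. -/
noncomputable def chebT (n : ℕ) : ℝ → ℝ := fun x => (Polynomial.Chebyshev.T ℝ n).eval x

/-- The eigenvalues of the weighted Laplace single-layer operator: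
`σ₀ = ln 2 / 2` and `σₙ = 1/(2n)` for `n ≥ 1`. -/
noncomputable def sigmaCheb : ℕ → ℝ := fun n =>
  if n = 0 then Real.log 2 / 2 else 1 / (2 * n)

/-!
Put `x = cos φ` and `y = cos θ`, so that `Tₙ(y) dy / √(1 - y²)` becomes `cos (nθ) dθ`. The identity
`|cos φ - cos θ| = 2 |sin ((θ + φ) / 2)| |sin ((θ - φ) / 2)|` writes the logarithmic kernel as
`log 2` plus two translates of the even periodic kernel `log |sin (u / 2)|`, and convolution with an
even periodic kernel is diagonal on cosines. The eigenvalues are therefore read off the Fourier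
cosine coefficients of `log |sin (u / 2)|`. For `n = 0` this is the classical integral of `log sin`;
otherwise integrating by parts turns the logarithm into `sin (nu) cot (u / 2)`, which is the
polynomial `(1 + cos u) Uₙ₋₁(cos u)` in `cos u`, with integral `π` over `[0, π]`.
-/

section EvenPeriodic

variable {E : Type*} [NormedAddCommGroup E] [NormedSpace ℝ E]

theorem integral_neg_self_of_odd {f : ℝ → E} (hf : Function.Odd f) (a : ℝ) :
    ∫ u in -a..a, f u = 0 := by
  have hneg : ∫ u in -a..a, f u = -∫ u in -a..a, f u := by
    simpa [hf _] using (integral_comp_neg (a := -a) (b := a) f).symm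
  have : IsAddTorsionFree E := .of_isTorsionFree ℝ E
  exact self_eq_neg.mp hneg

theorem integral_neg_self_of_even {f : ℝ → E} (hf : Function.Even f) {a : ℝ}
    (hint : IntervalIntegrable f volume 0 a) :
    ∫ u in -a..a, f u = (2 : ℝ) • ∫ u in (0 : ℝ)..a, f u := by
  have hint_neg : IntervalIntegrable f volume (-a) 0 := by
    simpa [hf _] using ((IntervalIntegrable.iff_comp_neg).mp hint).symm
  have hreflect : ∫ u in -a..0, f u = ∫ u in (0 : ℝ)..a, f u := by
    simpa [hf _] using (integral_comp_neg (a := 0) (b := a) f).symm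
  rw [← integral_add_adjacent_intervals hint_neg hint, hreflect, two_smul]

theorem even_comp_add_add_comp_sub {α β : Type*} [AddCommGroup α] [AddCommMagma β] {f : α → β}
    (hf : Function.Even f) (a : α) : Function.Even fun x => f (x + a) + f (x - a) := fun x => by
  have hadd : f (-x + a) = f (x - a) := by rw [← hf, neg_add_rev, neg_neg, neg_add_eq_sub]
  have hsub : f (-x - a) = f (x + a) := by rw [← hf, neg_sub, sub_neg_eq_add, add_comm]
  simpa only [hadd, hsub] using add_comm (f (x - a)) (f (x + a))

variable {f : ℝ → ℝ}

theorem integral_comp_sub_mul_cos_of_even (heven : Function.Even f)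
    (hper : Function.Periodic f (2 * π)) (hint : IntervalIntegrable f volume 0 (2 * π))
    (n : ℕ) (φ : ℝ) :
    ∫ θ in -π..π, f (θ - φ) * cos (n * θ) = cos (n * φ) * ∫ u in -π..π, f u * cos (n * u) := by
  have hcos_per : Function.Periodic (fun u => f u * cos (n * (u + φ))) (2 * π) := by
    refine hper.mul fun u => ?_
    rw [← cos_add_nat_mul_two_pi (n * (u + φ)) n]
    ring_nf
  have hmul {g : ℝ → ℝ} (hg : Continuous g) :
      IntervalIntegrable (fun u => f u * g u) volume (-π) π :=
    (hper.intervalIntegrable₀ two_pi_pos.ne' hint _ _).mul_continuousOn hg.continuousOn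
  have hsin : ∫ u in -π..π, f u * sin (n * u) = 0 :=
    integral_neg_self_of_odd (heven.mul_odd fun u => by rw [mul_neg, sin_neg]) π
  calc ∫ θ in -π..π, f (θ - φ) * cos (n * θ)
    _ = ∫ u in (-π - φ)..(π - φ), f u * cos (n * (u + φ)) := by
      rw [← integral_comp_sub_right (fun u => f u * cos (n * (u + φ)))]
      simp only [sub_add_cancel]
    _ = ∫ u in -π..π, f u * cos (n * (u + φ)) := by
      convert hcos_per.intervalIntegral_add_eq (-π - φ) (-π) using 2 <;> ring
    _ = ∫ u in -π..π, (cos (n * φ) * (f u * cos (n * u)) - sin (n * φ) * (f u * sin (n * u))) := by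
      congr 1 with u
      rw [mul_add, cos_add]
      ring
    _ = cos (n * φ) * ∫ u in -π..π, f u * cos (n * u) := by
      rw [intervalIntegral.integral_sub ((hmul (by fun_prop)).const_mul _)
        ((hmul (by fun_prop)).const_mul _), intervalIntegral.integral_const_mul,
        intervalIntegral.integral_const_mul, hsin, mul_zero, sub_zero]

theorem integral_comp_add_add_comp_sub_mul_cos_of_even (heven : Function.Even f)
    (hper : Function.Periodic f (2 * π)) (hint : IntervalIntegrable f volume 0 (2 * π))
    (n : ℕ) (φ : ℝ) :
    ∫ θ in (0 : ℝ)..π, (f (θ + φ) + f (θ - φ)) * cos (n * θ)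
      = 2 * cos (n * φ) * ∫ u in (0 : ℝ)..π, f u * cos (n * u) := by
  have hf (a b : ℝ) := hper.intervalIntegrable₀ two_pi_pos.ne' hint a b
  have hmul {g : ℝ → ℝ} (hg : ∀ a b, IntervalIntegrable g volume a b) (a b : ℝ) :
      IntervalIntegrable (fun θ => g θ * cos (n * θ)) volume a b :=
    (hg a b).mul_continuousOn (by fun_prop)
  have hsub (ψ : ℝ) := hmul fun a b => by
    simpa only [sub_add_cancel] using (hf (a - ψ) (b - ψ)).comp_sub_right ψ
  have hadd : IntervalIntegrable (fun θ => (f (θ + φ) + f (θ - φ)) * cos (n * θ)) volume 0 π := by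
    simpa only [sub_neg_eq_add, add_mul] using (hsub (-φ) 0 π).add (hsub φ 0 π)
  have heven_cos : Function.Even fun u => f u * cos (n * u) :=
    heven.mul_even fun u => by rw [mul_neg, cos_neg]
  have heven_add : Function.Even fun θ => (f (θ + φ) + f (θ - φ)) * cos (n * θ) :=
    (even_comp_add_add_comp_sub heven φ).mul_even fun θ => by rw [mul_neg, cos_neg]
  have hdouble : 2 * ∫ θ in (0 : ℝ)..π, (f (θ + φ) + f (θ - φ)) * cos (n * θ)
      = 2 * (2 * cos (n * φ) * ∫ u in (0 : ℝ)..π, f u * cos (n * u)) := by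
    calc 2 * ∫ θ in (0 : ℝ)..π, (f (θ + φ) + f (θ - φ)) * cos (n * θ)
      _ = ∫ θ in -π..π, (f (θ + φ) + f (θ - φ)) * cos (n * θ) :=
        (integral_neg_self_of_even heven_add hadd).symm
      _ = (∫ θ in -π..π, f (θ - -φ) * cos (n * θ)) + ∫ θ in -π..π, f (θ - φ) * cos (n * θ) := by
        rw [← intervalIntegral.integral_add (hsub _ _ _) (hsub _ _ _)]
        simp only [sub_neg_eq_add, add_mul]
      _ = 2 * cos (n * φ) * ∫ u in -π..π, f u * cos (n * u) := by
        rw [integral_comp_sub_mul_cos_of_even heven hper hint,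
          integral_comp_sub_mul_cos_of_even heven hper hint, mul_neg, cos_neg]
        ring
      _ = 2 * (2 * cos (n * φ) * ∫ u in (0 : ℝ)..π, f u * cos (n * u)) := by
        rw [integral_neg_self_of_even heven_cos (hmul hf 0 π), smul_eq_mul]
        ring
  exact mul_left_cancel₀ two_ne_zero hdouble

end EvenPeriodic

/-- The kernel `log |sin (u / 2)|`, two translates of which make up the logarithmic kernel
`log |cos φ - cos θ|`. No absolute value is written because `Real.log` is even. -/
noncomputable def logSinHalf (u : ℝ) : ℝ := log (sin (u / 2))

theorem even_logSinHalf : Function.Even logSinHalf := fun u => by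
  rw [logSinHalf, neg_div, sin_neg, log_neg_eq_log, logSinHalf]

theorem periodic_logSinHalf : Function.Periodic logSinHalf (2 * π) := fun u => by
  rw [logSinHalf, add_div, mul_div_cancel_left₀ π two_ne_zero, sin_add_pi, log_neg_eq_log,
    logSinHalf]

theorem intervalIntegrable_logSinHalf (a b : ℝ) : IntervalIntegrable logSinHalf volume a b :=
  MeromorphicOn.intervalIntegrable_log fun _ _ => AnalyticAt.meromorphicAt (by fun_prop)

theorem log_abs_cos_sub_cos {θ φ : ℝ} (h : cos φ ≠ cos θ) :
    log |cos φ - cos θ| = log 2 + (logSinHalf (θ + φ) + logSinHalf (θ - φ)) := by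
  have hprod : cos φ - cos θ = 2 * (sin ((θ + φ) / 2) * sin ((θ - φ) / 2)) := by
    rw [← neg_sub, cos_sub_cos]
    ring
  have hne : 2 * (sin ((θ + φ) / 2) * sin ((θ - φ) / 2)) ≠ 0 := hprod ▸ sub_ne_zero.mpr h
  have hne' := right_ne_zero_of_mul hne
  rw [log_abs, hprod, log_mul two_ne_zero hne',
    log_mul (left_ne_zero_of_mul hne') (right_ne_zero_of_mul hne'), logSinHalf, logSinHalf]

theorem ae_cos_ne_cos (φ : ℝ) : ∀ᵐ θ : ℝ, cos φ ≠ cos θ := by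
  have hcount : ((range fun k : ℤ => 2 * k * π + φ) ∪ range fun k : ℤ => 2 * k * π - φ).Countable :=
    (countable_range _).union (countable_range _)
  filter_upwards [hcount.ae_notMem volume] with θ hθ hcos
  obtain ⟨k, hk | hk⟩ := cos_eq_cos_iff.mp hcos
  · exact hθ (.inl ⟨k, hk.symm⟩)
  · exact hθ (.inr ⟨k, hk.symm⟩)

theorem integral_cos_natCast_mul {n : ℕ} (hn : n ≠ 0) : ∫ θ in (0 : ℝ)..π, cos (n * θ) = 0 := by
  rw [integral_comp_mul_left _ (Nat.cast_ne_zero.mpr hn)]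
  simp [sin_nat_mul_pi]

section FourierCoefficients

open Polynomial.Chebyshev

theorem integral_one_add_cos_mul_U_cos (n : ℕ) :
    ∫ u in (0 : ℝ)..π, (1 + cos u) * (U ℝ n).eval (cos u) = π := by
  have hint {g : ℝ → ℝ} (hg : Continuous g) : IntervalIntegrable g volume 0 π :=
    hg.intervalIntegrable 0 π
  induction n with
  | zero => simp [intervalIntegral.integral_add (hint continuous_const) (hint continuous_cos)]
  | succ n ih =>
    have hrec (u : ℝ) : (1 + cos u) * (U ℝ (n + 1 : ℕ)).eval (cos u)
        = (1 + cos u) * (U ℝ n).eval (cos u)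
          + (cos ((n + 1 : ℕ) * u) + cos ((n + 2 : ℕ) * u)) := by
      have hU := congrArg (Polynomial.eval (cos u)) (U_eq_X_mul_U_add_T ℝ n)
      have hT := congrArg (Polynomial.eval (cos u)) (T_eq_X_mul_U_sub_U ℝ n)
      simp only [Polynomial.eval_add, Polynomial.eval_sub, Polynomial.eval_mul, Polynomial.eval_X,
        T_real_cos] at hU hT
      push_cast at hU hT ⊢
      linear_combination hU - hT
    simp_rw [hrec]
    rw [intervalIntegral.integral_add (hint (by fun_prop)) (hint (by fun_prop)), ih,
      intervalIntegral.integral_add (hint (by fun_prop)) (hint (by fun_prop)),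
      integral_cos_natCast_mul (by simp), integral_cos_natCast_mul (by simp), add_zero, add_zero]

theorem sin_add_one_mul_eq_half_angle (n : ℤ) (u : ℝ) :
    sin ((n + 1) * u) = 2 * sin (u / 2) * cos (u / 2) * (U ℝ n).eval (cos u) := by
  rw [← U_real_cos, ← sin_two_mul, mul_div_cancel₀ u two_ne_zero, mul_comm]

theorem continuous_logSinHalf_mul_sin (n : ℤ) :
    Continuous fun u => logSinHalf u * sin ((n + 1) * u) := by
  have hfactor (u : ℝ) : logSinHalf u * sin ((n + 1) * u)
      = (sin (u / 2) * log (sin (u / 2))) * (2 * cos (u / 2) * (U ℝ n).eval (cos u)) := by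
    rw [sin_add_one_mul_eq_half_angle, logSinHalf]
    ring
  simp_rw [hfactor]
  exact (continuous_mul_log.comp (by fun_prop : Continuous fun u : ℝ => sin (u / 2))).mul
    (by fun_prop)

theorem hasDerivAt_logSinHalf {u : ℝ} (hu : sin (u / 2) ≠ 0) :
    HasDerivAt logSinHalf (cos (u / 2) / (2 * sin (u / 2))) u := by
  convert! ((hasDerivAt_id u).div_const 2).sin.log hu using 1
  simp only [id]
  ring

theorem hasDerivAt_logSinHalf_mul_sin (n : ℤ) {u : ℝ} (hu : sin (u / 2) ≠ 0) :
    HasDerivAt (fun u => logSinHalf u * sin ((n + 1) * u))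
      ((1 + cos u) * (U ℝ n).eval (cos u) / 2
        + (n + 1) * (logSinHalf u * cos ((n + 1) * u))) u := by
  have hsin : HasDerivAt (fun u => sin ((n + 1) * u)) (cos ((n + 1) * u) * (n + 1)) u := by
    simpa using ((hasDerivAt_id u).const_mul (n + 1 : ℝ)).sin
  have hcot : cos (u / 2) / (2 * sin (u / 2)) * sin ((n + 1) * u)
      = (1 + cos u) * (U ℝ n).eval (cos u) / 2 := by
    have hcos : 1 + cos u = 2 * cos (u / 2) ^ 2 := by
      rw [cos_sq, mul_div_cancel₀ u two_ne_zero]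
      ring
    rw [sin_add_one_mul_eq_half_angle, hcos]
    field_simp
  convert! (hasDerivAt_logSinHalf hu).mul hsin using 1
  rw [hcot]
  ring

theorem integral_logSinHalf : ∫ u in (0 : ℝ)..π, logSinHalf u = -(π * log 2) := by
  have hscale := intervalIntegral.integral_comp_div (a := 0) (b := π)
    (fun t => log (sin t)) (two_ne_zero (α := ℝ))
  simp only [logSinHalf, hscale, zero_div, integral_log_sin_zero_pi_div_two, smul_eq_mul]
  ring

theorem integral_logSinHalf_mul_cos {n : ℕ} (hn : n ≠ 0) :
    ∫ u in (0 : ℝ)..π, logSinHalf u * cos (n * u) = -π / (2 * n) := by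
  obtain ⟨n, rfl⟩ := Nat.exists_eq_succ_of_ne_zero hn
  have hU : IntervalIntegrable (fun u => (1 + cos u) * (U ℝ n).eval (cos u) / 2) volume 0 π :=
    (by fun_prop : Continuous _).intervalIntegrable 0 π
  have hlog : IntervalIntegrable
      (fun u => ((n : ℤ) + 1) * (logSinHalf u * cos (((n : ℤ) + 1) * u))) volume 0 π :=
    ((intervalIntegrable_logSinHalf 0 π).mul_continuousOn (by fun_prop)).const_mul _
  have hFTC := integral_eq_sub_of_hasDerivAt_of_le pi_nonneg
    (continuous_logSinHalf_mul_sin n).continuousOn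
    (fun u hu => hasDerivAt_logSinHalf_mul_sin n
      (sin_pos_of_mem_Ioo ⟨half_pos hu.1, by linarith [hu.1, hu.2]⟩).ne') (hU.add hlog)
  have hboundary : logSinHalf π = 0 ∧ logSinHalf 0 = 0 := by simp [logSinHalf]
  rw [intervalIntegral.integral_add hU hlog, intervalIntegral.integral_div,
    integral_one_add_cos_mul_U_cos, intervalIntegral.integral_const_mul, hboundary.1, hboundary.2,
    zero_mul, zero_mul, sub_zero] at hFTC
  push_cast at hFTC ⊢
  field_simp
  linarith

end FourierCoefficients

theorem integral_log_abs_cos_sub_cos_mul_cos_eq_logSinHalf (n : ℕ) (φ : ℝ) :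
    ∫ θ in (0 : ℝ)..π, log |cos φ - cos θ| * cos (n * θ)
      = log 2 * (∫ θ in (0 : ℝ)..π, cos (n * θ))
        + 2 * cos (n * φ) * ∫ u in (0 : ℝ)..π, logSinHalf u * cos (n * u) := by
  have hcos : Continuous fun θ : ℝ => cos (n * θ) := by fun_prop
  have hK : IntervalIntegrable
      (fun θ => (logSinHalf (θ + φ) + logSinHalf (θ - φ)) * cos (n * θ)) volume 0 π := by
    refine .mul_continuousOn (.add ?_ ?_) hcos.continuousOn
    · simpa using (intervalIntegrable_logSinHalf (0 + φ) (π + φ)).comp_add_right φ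
    · simpa using (intervalIntegrable_logSinHalf (0 - φ) (π - φ)).comp_sub_right φ
  calc ∫ θ in (0 : ℝ)..π, log |cos φ - cos θ| * cos (n * θ)
    _ = ∫ θ in (0 : ℝ)..π, (log 2 * cos (n * θ)
          + (logSinHalf (θ + φ) + logSinHalf (θ - φ)) * cos (n * θ)) := by
      refine integral_congr_ae ?_
      filter_upwards [ae_cos_ne_cos φ] with θ hθ _
      rw [log_abs_cos_sub_cos hθ, add_mul]
    _ = _ := by
      rw [intervalIntegral.integral_add ((hcos.intervalIntegrable 0 π).const_mul _) hK,
        intervalIntegral.integral_const_mul,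
        integral_comp_add_add_comp_sub_mul_cos_of_even even_logSinHalf periodic_logSinHalf
          (intervalIntegrable_logSinHalf _ _)]

theorem integral_log_abs_cos_sub_cos_mul_cos (n : ℕ) (φ : ℝ) :
    ∫ θ in (0 : ℝ)..π, log |cos φ - cos θ| * cos (n * θ)
      = -(2 * π) * (sigmaCheb n * cos (n * φ)) := by
  rw [integral_log_abs_cos_sub_cos_mul_cos_eq_logSinHalf, sigmaCheb]
  rcases eq_or_ne n 0 with rfl | hn
  · simp only [Nat.cast_zero, zero_mul, cos_zero, mul_one, intervalIntegral.integral_const,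
      smul_eq_mul, sub_zero, integral_logSinHalf, if_true]
    ring
  · rw [if_neg hn, integral_cos_natCast_mul hn, integral_logSinHalf_mul_cos hn]
    field_simp
    ring

theorem integral_div_sqrt_one_sub_sq (f : ℝ → ℝ) :
    ∫ y in (-1 : ℝ)..1, f y / √(1 - y ^ 2) = ∫ θ in (0 : ℝ)..π, f (cos θ) := by
  simp_rw [← Polynomial.Chebyshev.integral_measureT_eq_integral_cos,
    Polynomial.Chebyshev.integral_measureT, sqrt_inv, div_eq_mul_inv]

theorem chebT_cos (n : ℕ) (θ : ℝ) : chebT n (cos θ) = cos (n * θ) :=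
  Polynomial.Chebyshev.T_real_cos θ n

theorem weighted_single_layer_chebT_eigen_general (n : ℕ) {x : ℝ} (hx : x ∈ Icc (-1 : ℝ) 1) :
    -(1 / (2 * π)) * ∫ y in (-1 : ℝ)..1, log |x - y| * chebT n y / √(1 - y ^ 2)
      = sigmaCheb n * chebT n x := by
  obtain ⟨φ, rfl⟩ : ∃ φ, cos φ = x := ⟨arccos x, cos_arccos hx.1 hx.2⟩
  rw [integral_div_sqrt_one_sub_sq]
  simp only [chebT_cos]
  rw [integral_log_abs_cos_sub_cos_mul_cos]
  field_simp

/-- The Chebyshev polynomials `Tₙ` are eigenfunctions of the weighted Laplace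
single-layer operator, with eigenvalues `σₙ`. -/
theorem weighted_single_layer_chebT_eigen (n : ℕ) (x : ℝ) (hx : x ∈ Ioo (-1 : ℝ) 1) :
    -(1 / (2 * π)) * ∫ y in (-1 : ℝ)..1,
        Real.log |x - y| * chebT n y / Real.sqrt (1 - y ^ 2)
      = sigmaCheb n * chebT n x :=
  weighted_single_layer_chebT_eigen_general n (Ioo_subset_Icc_self hx)
end

section
/- Let f be a measurable real-valued function on (−1,1) with ∫_{−1}^{1} f(x)²/√(1−x²) dx < ∞, and define its Fourier–Chebyshev coefficients by â₀ = (1/π)∫_{−1}^{1} f(x)/√(1−x²) dx and âₙ = (2/π)∫_{−1}^{1} f(x)·Tₙ(x)/√(1−x²) dx for n ≥ 1. Then the following are equivalent: (i) for every natural number s, Σ_{n=0}^{∞} (1+n²)^s·âₙ² < ∞; (ii) there exists an infinitely differentiable function g : ℝ → ℝ such that f = g almost everywhere on (−1,1). (This is the identification T^∞ = C^∞([−1,1]).) -/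
open Real Set MeasureTheory

/-- The Fourier–Chebyshev coefficients of a function on `(-1,1)`. -/
noncomputable def fourierCheb (f : ℝ → ℝ) : ℕ → ℝ := fun n =>
  if n = 0 then (1 / π) * ∫ x in Ioo (-1 : ℝ) 1, f x / Real.sqrt (1 - x ^ 2)
  else (2 / π) * ∫ x in Ioo (-1 : ℝ) 1, f x * chebT n x / Real.sqrt (1 - x ^ 2)

/-!
Let `μ` be the measure `dx / √(1 - x²)` on `(-1, 1)`, for which the `Tₙ` are orthogonal.

The operator `D = 1 + x ∂ - (1 - x²) ∂²` is symmetric for `μ` and satisfies `D Tₙ = (1 + n²) Tₙ`.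
Hence `(1 + n²)^k ∫ g Tₙ dμ = ∫ (D^k g) Tₙ dμ` is bounded in `n` for every smooth `g`.

Conversely, if the coefficients `aₙ` of `f` decay rapidly, then `∑ aₙ Tₙ` is smooth up to the
boundary of `[-1, 1]`, and the point is to extend it to `ℝ`. Since `T_m(cosh t) = cosh (m t)`, the
`T_m` with `m ≤ n` are uniformly bounded on a neighbourhood of `[-1, 1]` of width `1 / (1 + n²)`,
and each derivative costs a factor `n²` there. Cutting `Tₙ` off on exactly this neighbourhood also
costs a factor `1 + n²` per derivative, so the series of cut-off polynomials converges in `C^∞(ℝ)`.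
Its sum has the same coefficients as `f`, hence equals `f` a.e. by the Weierstrass approximation
theorem.
-/

section PolynomialMoments

open Polynomial

theorem integrable_smul_of_ae_mem_isCompact {α E : Type*} [TopologicalSpace α] [MeasurableSpace α]
    [OpensMeasurableSpace α] [NormedAddCommGroup E] [NormedSpace ℝ E] {μ : Measure α} {K : Set α}
    (hK : IsCompact K) (hμ : ∀ᵐ x ∂μ, x ∈ K) {φ : α → ℝ} (hφ : Continuous φ) {h : α → E}
    (hh : Integrable h μ) : Integrable (fun x ↦ φ x • h x) μ := by
  obtain ⟨C, hC⟩ := hK.exists_bound_of_continuousOn hφ.continuousOn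
  exact hh.bdd_smul C hφ.aestronglyMeasurable (hμ.mono hC)

variable {E : Type*} [NormedAddCommGroup E] [NormedSpace ℝ E] {μ : Measure ℝ} {a b : ℝ} {h : ℝ → E}

theorem integral_continuous_smul_eq_zero_of_forall_integral_eval_smul_eq_zero
    (hμ : ∀ᵐ x ∂μ, x ∈ Icc a b) (hh : Integrable h μ)
    (hp : ∀ p : ℝ[X], ∫ x, p.eval x • h x ∂μ = 0) {φ : ℝ → ℝ} (hφ : Continuous φ) :
    ∫ x, φ x • h x ∂μ = 0 := by
  set I := ∫ x, ‖h x‖ ∂μ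
  have hI : 0 < I + 1 :=
    add_pos_of_nonneg_of_pos (integral_nonneg fun _ ↦ norm_nonneg _) one_pos
  rw [← norm_le_zero_iff]
  refine le_of_forall_pos_le_add fun ε hε ↦ ?_
  obtain ⟨p, hpφ⟩ := exists_polynomial_near_of_continuousOn a b φ hφ.continuousOn
    (ε / (I + 1)) (div_pos hε hI)
  have h_sub : ∫ x, φ x • h x ∂μ = ∫ x, (φ x - p.eval x) • h x ∂μ := by
    simp_rw [sub_smul]
    rw [integral_sub (integrable_smul_of_ae_mem_isCompact isCompact_Icc hμ hφ hh)
      (integrable_smul_of_ae_mem_isCompact isCompact_Icc hμ p.continuous hh), hp, sub_zero]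
  rw [h_sub, zero_add]
  calc ‖∫ x, (φ x - p.eval x) • h x ∂μ‖
      ≤ ∫ x, ε / (I + 1) * ‖h x‖ ∂μ := by
        refine norm_integral_le_of_norm_le (hh.norm.const_mul _) ?_
        filter_upwards [hμ] with x hx
        rw [norm_smul, norm_sub_rev]
        gcongr
        exact (hpφ x hx).le
    _ = ε * (I / (I + 1)) := by rw [integral_const_mul]; ring
    _ ≤ ε := mul_le_of_le_one_right hε.le (div_le_one_of_le₀ (by linarith) hI.le)

theorem ae_eq_zero_of_forall_integral_eval_smul_eq_zero [CompleteSpace E]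
    (hμ : ∀ᵐ x ∂μ, x ∈ Icc a b) (hh : Integrable h μ)
    (hp : ∀ p : ℝ[X], ∫ x, p.eval x • h x ∂μ = 0) : ∀ᵐ x ∂μ, h x = 0 :=
  ae_eq_zero_of_integral_contDiff_smul_eq_zero hh.locallyIntegrable fun _ hφ _ ↦
    integral_continuous_smul_eq_zero_of_forall_integral_eval_smul_eq_zero hμ hh hp hφ.continuous

end PolynomialMoments

section ChebyshevPolynomials

open Polynomial Polynomial.Chebyshev

theorem span_range_T {R : Type*} [CommRing R] [IsDomain R] (h2 : IsUnit (2 : R)) :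
    Submodule.span R (range fun n : ℕ ↦ T R n) = ⊤ := by
  have : NeZero (2 : R) := ⟨h2.ne_zero⟩
  exact Polynomial.Sequence.span ⟨fun n ↦ T R n, fun n ↦ by rw [degree_T, Int.natAbs_natCast]⟩
    fun n ↦ by simpa only [leadingCoeff_T] using h2.pow _

section MapBounds

variable {E : Type*} [SeminormedAddCommGroup E] {n : ℕ} {M : ℝ}

theorem norm_map_U_le (φ : ℝ[X] →+ E) (hφ : ∀ m ≤ n, ‖φ (T ℝ m)‖ ≤ M) {m : ℕ} (hm : m ≤ n) :
    ‖φ (U ℝ m)‖ ≤ (m + 1) * M := by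
  have norm_map_two_mul_le (p : ℝ[X]) : ‖φ (2 * p)‖ ≤ 2 * ‖φ p‖ := by
    simpa [two_mul] using norm_add_le (φ p) (φ p)
  induction m using Nat.twoStepInduction with
  | zero => simpa using hφ 0 hm
  | one =>
    have hT := hφ 1 hm
    have h_two := norm_map_two_mul_le X
    simp only [Nat.cast_one, T_one, U_one] at hT ⊢
    linarith
  | more m ih _ =>
    have hT := hφ (m + 2) hm
    have h_two := norm_map_two_mul_le (T ℝ (m + 2))
    have h_add := norm_add_le (φ (2 * T ℝ (m + 2))) (φ (U ℝ m))
    have hU := ih (by lia)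
    push_cast at hT ⊢
    rw [U_eq_two_mul_T_add_U, map_add]
    linarith

theorem norm_map_derivative_T_le (φ : ℝ[X] →+ E) (hφ : ∀ m ≤ n, ‖φ (T ℝ m)‖ ≤ M) {m : ℕ}
    (hm : m ≤ n) : ‖φ (derivative (T ℝ m))‖ ≤ n ^ 2 * M := by
  have hM : 0 ≤ M := (norm_nonneg _).trans (hφ m hm)
  cases m with
  | zero => simpa using by positivity
  | succ m =>
    have h_deriv : derivative (T ℝ (m + 1 : ℕ)) = (m + 1) • U ℝ m := by
      simp [T_derivative_eq_U, nsmul_eq_mul]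
    have hmn : (m : ℝ) + 1 ≤ n := mod_cast hm
    rw [h_deriv, map_nsmul]
    calc ‖(m + 1) • φ (U ℝ m)‖ ≤ (m + 1 : ℕ) * ‖φ (U ℝ m)‖ := norm_nsmul_le
      _ ≤ (m + 1 : ℕ) * ((m + 1) * M) := by gcongr; exact norm_map_U_le φ hφ (by lia)
      _ = (m + 1) ^ 2 * M := by push_cast; ring
      _ ≤ n ^ 2 * M := by gcongr

theorem norm_map_iterate_derivative_T_le (φ : ℝ[X] →+ E) (hφ : ∀ m ≤ n, ‖φ (T ℝ m)‖ ≤ M)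
    (k : ℕ) {m : ℕ} (hm : m ≤ n) :
    ‖φ (derivative^[k] (T ℝ m))‖ ≤ ((n : ℝ) ^ 2) ^ k * M := by
  induction k generalizing φ M with
  | zero => simpa using hφ m hm
  | succ k ih =>
    rw [Function.iterate_succ_apply', pow_succ, mul_assoc]
    exact ih (φ.comp derivative.toAddMonoidHom) fun _ hm ↦ norm_map_derivative_T_le φ hφ hm

end MapBounds

theorem abs_eval_T_abs (n : ℤ) (x : ℝ) : |(T ℝ n).eval (|x|)| = |(T ℝ n).eval x| := by
  rcases abs_choice x with hx | hx <;> simp [hx, T_eval_neg, abs_mul]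

theorem one_add_sq_div_two_le_cosh (t : ℝ) : 1 + t ^ 2 / 2 ≤ cosh t := by
  have h_cosh : cosh t = 1 + 2 * sinh (t / 2) ^ 2 := by
    have := cosh_two_mul (t / 2)
    rw [cosh_sq, mul_div_cancel₀ _ two_ne_zero] at this
    linarith
  have h_sinh : (t / 2) ^ 2 ≤ sinh (t / 2) ^ 2 := by
    rw [sq_le_sq, abs_sinh]
    exact self_le_sinh_iff.2 (abs_nonneg _)
  linarith

theorem abs_eval_T_le_cosh_sqrt_two {n : ℤ} {r x : ℝ} (hr : 0 < r) (hn : (n : ℝ) ^ 2 ≤ r)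
    (hx : |x| ≤ 1 + r⁻¹) : |(T ℝ n).eval x| ≤ cosh √2 := by
  rcases le_total |x| 1 with hx1 | hx1
  · exact (abs_eval_T_real_le_one n hx1).trans (one_le_cosh _)
  · rw [← abs_eval_T_abs, ← cosh_arcosh hx1, T_real_cosh, abs_of_pos (cosh_pos _), cosh_le_cosh,
      ← sq_le_sq, sq_sqrt zero_le_two]
    have h_arcosh : arcosh |x| ^ 2 ≤ 2 * r⁻¹ := by
      have := one_add_sq_div_two_le_cosh (arcosh |x|)
      rw [cosh_arcosh hx1] at this
      linarith
    calc (n * arcosh |x|) ^ 2 = (n : ℝ) ^ 2 * arcosh |x| ^ 2 := mul_pow _ _ _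
      _ ≤ r * (2 * r⁻¹) := by gcongr
      _ = 2 := by field_simp

end ChebyshevPolynomials

section HasDerivBounds

open Topology
open scoped ContDiff

/-- A family of smooth functions `F i` whose derivatives of order `k` are `O(w i ^ k)`, uniformly
over the sets `S i`: the scale `w i` is the price of one derivative of `F i`. -/
structure HasDerivBounds {ι E A : Type*} [NormedAddCommGroup E] [NormedSpace ℝ E]
    [NormedAddCommGroup A] [NormedSpace ℝ A] (F : ι → E → A) (w : ι → ℝ) (S : ι → Set E) :
    Prop where
  contDiff : ∀ i, ContDiff ℝ ∞ (F i)
  exists_bound : ∀ k, ∃ C, ∀ i, ∀ x ∈ S i, ‖iteratedFDeriv ℝ k (F i) x‖ ≤ C * w i ^ k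

namespace HasDerivBounds

variable {ι E : Type*} [NormedAddCommGroup E] [NormedSpace ℝ E] {w : ι → ℝ} {S : ι → Set E}

theorem mul {A : Type*} [NormedRing A] [NormedAlgebra ℝ A] {F G : ι → E → A}
    (hF : HasDerivBounds F w S) (hG : HasDerivBounds G w S) :
    HasDerivBounds (fun i x ↦ F i x * G i x) w S where
  contDiff i := (hF.contDiff i).mul (hG.contDiff i)
  exists_bound k := by
    choose C hC using hF.exists_bound
    choose D hD using hG.exists_bound
    refine ⟨∑ j ∈ Finset.range (k + 1), k.choose j * C j * D (k - j), fun i x hx ↦ ?_⟩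
    refine (norm_iteratedFDeriv_mul_le (hF.contDiff i) (hG.contDiff i) x
      (mod_cast le_top)).trans ?_
    rw [Finset.sum_mul]
    refine Finset.sum_le_sum fun j hj ↦ ?_
    have hCj : 0 ≤ C j * w i ^ j := (norm_nonneg _).trans (hC j i x hx)
    calc (k.choose j : ℝ) * ‖iteratedFDeriv ℝ j (F i) x‖ * ‖iteratedFDeriv ℝ (k - j) (G i) x‖
        ≤ k.choose j * (C j * w i ^ j) * (D (k - j) * w i ^ (k - j)) := by
          gcongr
          · exact hC j i x hx
          · exact hD (k - j) i x hx
      _ = k.choose j * C j * D (k - j) * (w i ^ j * w i ^ (k - j)) := by ring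
      _ = k.choose j * C j * D (k - j) * w i ^ k := by
          rw [← pow_add, Nat.add_sub_cancel' (Finset.mem_range_succ_iff.1 hj)]

variable {A : Type*} [NormedAddCommGroup A] [NormedSpace ℝ A] {F : ι → E → A}

theorem univ_of_eventuallyEq_zero (hF : HasDerivBounds F w S) (hw : ∀ i, 0 ≤ w i)
    (hS : ∀ i, ∀ x ∉ S i, F i =ᶠ[𝓝 x] 0) : HasDerivBounds F w fun _ ↦ univ where
  contDiff := hF.contDiff
  exists_bound k := by
    obtain ⟨C, hC⟩ := hF.exists_bound k
    refine ⟨|C|, fun i x _ ↦ ?_⟩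
    have hwk : 0 ≤ w i ^ k := pow_nonneg (hw i) k
    by_cases hx : x ∈ S i
    · exact (hC i x hx).trans (by gcongr; exact le_abs_self C)
    · rw [((hS i x hx).iteratedFDeriv ℝ k).self_of_nhds, iteratedFDeriv_zero]
      simpa using by positivity

theorem contDiff_tsum_smul [CompleteSpace A] (hF : HasDerivBounds F w fun _ ↦ univ) {a : ι → ℝ}
    (ha : ∀ k : ℕ, Summable fun i ↦ w i ^ k * |a i|) :
    ContDiff ℝ ∞ fun x ↦ ∑' i, a i • F i x := by
  choose C hC using hF.exists_bound
  refine contDiff_tsum (v := fun k i ↦ C k * (w i ^ k * |a i|))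
    (fun i ↦ (hF.contDiff i).const_smul (a i)) (fun k _ ↦ (ha k).mul_left (C k)) fun k i x _ ↦ ?_
  have h_smul : iteratedFDeriv ℝ k (fun x ↦ a i • F i x) x = a i • iteratedFDeriv ℝ k (F i) x :=
    iteratedFDeriv_const_smul_apply ((hF.contDiff i).of_le (mod_cast le_top)).contDiffAt
  calc ‖iteratedFDeriv ℝ k (fun x ↦ a i • F i x) x‖
      = |a i| * ‖iteratedFDeriv ℝ k (F i) x‖ := by rw [h_smul, norm_smul, norm_eq_abs]
    _ ≤ |a i| * (C k * w i ^ k) := by gcongr; exact hC k i x (mem_univ x)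
    _ = C k * (w i ^ k * |a i|) := by ring

end HasDerivBounds

theorem hasDerivBounds_comp_affine {ι : Type*} {g : ℝ → ℝ} (hg : ContDiff ℝ ∞ g)
    (hb : ∀ k, ∃ C, ∀ x, ‖iteratedDeriv k g x‖ ≤ C) {w c d : ι → ℝ} (hc : ∀ i, |c i| ≤ w i)
    (S : ι → Set ℝ) : HasDerivBounds (fun i x ↦ g (c i * x + d i)) w S where
  contDiff i := hg.comp ((contDiff_const.mul contDiff_id).add contDiff_const)
  exists_bound k := by
    obtain ⟨C, hC⟩ := hb k
    refine ⟨C, fun i x _ ↦ ?_⟩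
    have h_shift : ContDiff ℝ k fun y ↦ g (y + d i) :=
      (hg.of_le (mod_cast le_top)).comp (contDiff_id.add contDiff_const)
    rw [norm_iteratedFDeriv_eq_norm_iteratedDeriv, iteratedDeriv_comp_const_mul h_shift,
      iteratedDeriv_comp_add_const, norm_mul, norm_pow, norm_eq_abs, mul_comm]
    have hC0 : 0 ≤ C := (norm_nonneg _).trans (hC 0)
    gcongr
    · exact hC _
    · exact hc i

theorem exists_forall_norm_iteratedDeriv_smoothTransition_le (k : ℕ) :
    ∃ C, ∀ x, ‖iteratedDeriv k smoothTransition x‖ ≤ C := by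
  have h_cont : Continuous (iteratedDeriv k smoothTransition) :=
    smoothTransition.contDiff.continuous_iteratedDeriv (n := ∞) k (mod_cast le_top)
  obtain ⟨C, hC⟩ := (isCompact_Icc (a := (0 : ℝ)) (b := 1)).exists_bound_of_continuousOn
    h_cont.continuousOn
  have h_const (c : ℝ) (hc : |c| ≤ 1) (x : ℝ) : ‖iteratedDeriv k (fun _ : ℝ ↦ c) x‖ ≤ 1 := by
    rw [iteratedDeriv_const]
    split_ifs <;> simp [hc]
  refine ⟨max C 1, fun x ↦ ?_⟩
  rcases lt_or_ge x 0 with hx0 | hx0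
  · have h_zero : smoothTransition =ᶠ[𝓝 x] fun _ ↦ 0 := by
      filter_upwards [Iio_mem_nhds hx0] with y hy using smoothTransition.zero_of_nonpos hy.le
    rw [h_zero.iteratedDeriv_eq]
    exact (h_const 0 (by simp) x).trans (le_max_right _ _)
  rcases le_or_gt x 1 with hx1 | hx1
  · exact (hC x ⟨hx0, hx1⟩).trans (le_max_left _ _)
  · have h_one : smoothTransition =ᶠ[𝓝 x] fun _ ↦ 1 := by
      filter_upwards [Ioi_mem_nhds hx1] with y hy using smoothTransition.one_of_one_le hy.le
    rw [h_one.iteratedDeriv_eq]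
    exact (h_const 1 (by simp) x).trans (le_max_right _ _)

end HasDerivBounds

section Extension

open Polynomial Polynomial.Chebyshev Topology
open scoped ContDiff

/-- A smooth plateau function, for `0 < r`: it is `1` on `[-1, 1]` and vanishes at distance at
least `1 / r` from that interval. It depends on `x` only through `± r * x`, so that every
derivative costs exactly one factor `r`. -/
noncomputable def plateau (r x : ℝ) : ℝ :=
  smoothTransition (r * x + (r + 1)) * smoothTransition (-r * x + (r + 1))

theorem plateau_of_mem_Icc {r x : ℝ} (hr : 0 ≤ r) (hx : x ∈ Icc (-1) 1) : plateau r x = 1 := by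
  rw [plateau, smoothTransition.one_of_one_le (by nlinarith [hx.1]),
    smoothTransition.one_of_one_le (by nlinarith [hx.2]), one_mul]

theorem plateau_of_one_add_inv_le_abs {r x : ℝ} (hr : 0 < r) (hx : 1 + r⁻¹ ≤ |x|) :
    plateau r x = 0 := by
  have h_mul : r + 1 ≤ r * |x| := by
    simpa [mul_add, hr.ne'] using mul_le_mul_of_nonneg_left hx hr.le
  rw [plateau, mul_eq_zero]
  rcases abs_cases x with ⟨hx, -⟩ | ⟨hx, -⟩ <;> rw [hx] at h_mul
  · exact .inr (smoothTransition.zero_of_nonpos (by linarith))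
  · exact .inl (smoothTransition.zero_of_nonpos (by linarith))

theorem hasDerivBounds_plateau {ι : Type*} {w : ι → ℝ} (hw : ∀ i, 0 ≤ w i) (S : ι → Set ℝ) :
    HasDerivBounds (fun i ↦ plateau (w i)) w S :=
  have h_affine {c : ι → ℝ} (hc : ∀ i, |c i| ≤ w i) :=
    hasDerivBounds_comp_affine smoothTransition.contDiff
      exists_forall_norm_iteratedDeriv_smoothTransition_le (d := fun i ↦ w i + 1) hc S
  (h_affine fun i ↦ (abs_of_nonneg (hw i)).le).mul
    (h_affine fun i ↦ (abs_neg _).trans_le (abs_of_nonneg (hw i)).le)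

theorem iteratedDeriv_eval {𝕜 : Type*} [NontriviallyNormedField 𝕜] (p : 𝕜[X]) (k : ℕ) :
    iteratedDeriv k (fun x ↦ p.eval x) = fun x ↦ (derivative^[k] p).eval x := by
  have h_deriv (p : 𝕜[X]) : deriv (fun x ↦ p.eval x) = fun x ↦ p.derivative.eval x :=
    funext fun _ ↦ p.deriv
  induction k generalizing p with
  | zero => exact iteratedDeriv_zero
  | succ k ih => rw [iteratedDeriv_succ', h_deriv, ih, Function.iterate_succ_apply]

theorem hasDerivBounds_T : HasDerivBounds (fun n : ℕ ↦ fun x ↦ (T ℝ n).eval x)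
    (fun n ↦ 1 + (n : ℝ) ^ 2) fun n ↦ {x | |x| ≤ 1 + (1 + (n : ℝ) ^ 2)⁻¹} where
  contDiff n := by simpa using (T ℝ n).contDiff_aeval (𝕜 := ℝ) ∞
  exists_bound k := by
    refine ⟨cosh √2, fun n x hx ↦ ?_⟩
    have h_value (m : ℕ) (hm : m ≤ n) : ‖(evalRingHom x).toAddMonoidHom (T ℝ m)‖ ≤ cosh √2 := by
      have hmn : (m : ℝ) ≤ n := mod_cast hm
      refine abs_eval_T_le_cosh_sqrt_two (by positivity) ?_ hx
      calc ((m : ℤ) : ℝ) ^ 2 = (m : ℝ) ^ 2 := by norm_cast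
        _ ≤ (n : ℝ) ^ 2 := by gcongr
        _ ≤ 1 + (n : ℝ) ^ 2 := by linarith
    rw [norm_iteratedFDeriv_eq_norm_iteratedDeriv, iteratedDeriv_eval]
    calc ‖(derivative^[k] (T ℝ n)).eval x‖ ≤ ((n : ℝ) ^ 2) ^ k * cosh √2 :=
          norm_map_iterate_derivative_T_le (evalRingHom x).toAddMonoidHom h_value k le_rfl
      _ ≤ (1 + (n : ℝ) ^ 2) ^ k * cosh √2 := by gcongr; linarith
      _ = cosh √2 * (1 + (n : ℝ) ^ 2) ^ k := mul_comm _ _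

theorem hasDerivBounds_plateau_mul_T :
    HasDerivBounds (fun n : ℕ ↦ fun x ↦ plateau (1 + (n : ℝ) ^ 2) x * (T ℝ n).eval x)
      (fun n ↦ 1 + (n : ℝ) ^ 2) fun _ ↦ univ := by
  refine ((hasDerivBounds_plateau (fun n ↦ by positivity) _).mul
    hasDerivBounds_T).univ_of_eventuallyEq_zero (fun n ↦ by positivity) fun n x hx ↦ ?_
  filter_upwards [continuous_abs.continuousAt.eventually_const_lt (not_le.1 hx)] with y hy
  rw [plateau_of_one_add_inv_le_abs (by positivity) hy.le, zero_mul, Pi.zero_apply]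

theorem exists_contDiff_eqOn_tsum_T {a : ℕ → ℝ}
    (ha : ∀ k : ℕ, Summable fun n : ℕ ↦ (1 + (n : ℝ) ^ 2) ^ k * |a n|) :
    ∃ g : ℝ → ℝ, ContDiff ℝ ∞ g ∧
      EqOn g (fun x ↦ ∑' n : ℕ, a n * (T ℝ n).eval x) (Icc (-1) 1) := by
  refine ⟨_, hasDerivBounds_plateau_mul_T.contDiff_tsum_smul ha, fun x hx ↦ tsum_congr fun n ↦ ?_⟩
  rw [plateau_of_mem_Icc (by positivity) hx, one_mul, smul_eq_mul]

end Extension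

section RapidDecay

variable {ι : Type*} {w a : ι → ℝ}

theorem summable_pow_mul_abs_of_forall_summable_pow_mul_sq (hw : ∀ i, w i ≠ 0)
    (hw_inv : Summable fun i ↦ (w i ^ 2)⁻¹) (ha : ∀ s : ℕ, Summable fun i ↦ w i ^ s * a i ^ 2)
    (s : ℕ) : Summable fun i ↦ w i ^ s * |a i| := by
  refine .of_norm_bounded ((ha (2 * (s + 1))).add hw_inv) fun i ↦ ?_
  have h_split : ‖w i ^ s * |a i|‖ = |w i ^ (s + 1) * a i| * |(w i)⁻¹| := by
    rw [← abs_mul, pow_succ, mul_right_comm, mul_inv_cancel_right₀ (hw i), norm_mul,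
      norm_eq_abs, norm_eq_abs, abs_abs, abs_mul]
  have h_amgm := two_mul_le_add_sq |w i ^ (s + 1) * a i| |(w i)⁻¹|
  rw [sq_abs, sq_abs, mul_pow, ← pow_mul', inv_pow] at h_amgm
  rw [h_split]
  linarith [mul_nonneg (abs_nonneg (w i ^ (s + 1) * a i)) (abs_nonneg (w i)⁻¹)]

theorem summable_pow_mul_sq_of_forall_pow_mul_abs_le (hw : ∀ i, 0 < w i)
    (hw_inv : Summable fun i ↦ (w i ^ 2)⁻¹) (ha : ∀ k : ℕ, ∃ C, ∀ i, w i ^ k * |a i| ≤ C) (s : ℕ) :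
    Summable fun i ↦ w i ^ s * a i ^ 2 := by
  choose C hC using ha
  refine .of_nonneg_of_le (fun i ↦ mul_nonneg (pow_pos (hw i) s).le (sq_nonneg _)) (fun i ↦ ?_)
    (hw_inv.mul_left (C (s + 2) * C 0))
  have hw0 := hw i
  calc w i ^ s * a i ^ 2
      = (w i ^ (s + 2) * |a i|) * (w i ^ 0 * |a i|) * (w i ^ 2)⁻¹ := by
        rw [← sq_abs]
        field_simp
        ring
    _ ≤ C (s + 2) * C 0 * (w i ^ 2)⁻¹ := by
        have hC_nonneg : 0 ≤ C (s + 2) := le_trans (by positivity) (hC (s + 2) i)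
        gcongr
        exacts [hC _ i, hC _ i]

theorem summable_one_add_sq_sq_inv : Summable fun n : ℕ ↦ ((1 + (n : ℝ) ^ 2) ^ 2)⁻¹ := by
  refine .of_nonneg_of_le (fun n ↦ by positivity) (fun n ↦ ?_)
    ((summable_nat_add_iff 1).2 (Real.summable_nat_pow_inv.2 one_lt_two))
  have hn : (n : ℝ) ≤ (n : ℝ) ^ 2 := mod_cast Nat.le_self_pow two_ne_zero n
  gcongr
  push_cast
  linarith

end RapidDecay

section ChebyshevCoefficients

open Polynomial Polynomial.Chebyshev
open scoped ContDiff

theorem measureT_eq_withDensity : measureT =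
    (volume.restrict (Ioo (-1) 1)).withDensity
      fun x ↦ ENNReal.ofNNReal (.mk (√(1 - x ^ 2)⁻¹) (by positivity)) := by
  rw [measureT, restrict_withDensity measurableSet_Ioc, Measure.restrict_congr_set Ioo_ae_eq_Ioc]

theorem ae_measureT : ae measureT = ae (volume.restrict (Ioo (-1 : ℝ) 1)) := by
  rw [measureT_eq_withDensity]
  refine (withDensity_absolutelyContinuous _ _).ae_le.antisymm
    (withDensity_absolutelyContinuous' (by fun_prop) ?_).ae_le
  filter_upwards [ae_restrict_mem measurableSet_Ioo] with x hx
  have h_pos : 0 < √(1 - x ^ 2)⁻¹ := sqrt_pos.2 (inv_pos.2 (by nlinarith [hx.1, hx.2]))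
  exact ENNReal.coe_ne_zero.2 fun h ↦ h_pos.ne' (congrArg NNReal.toReal h)

theorem ae_measureT_mem_Icc : ∀ᵐ x ∂measureT, x ∈ Icc (-1) 1 :=
  (ae_restrict_mem measurableSet_Ioc).mono fun _ hx ↦ Ioc_subset_Icc_self hx

instance isFiniteMeasure_measureT : IsFiniteMeasure measureT :=
  (integrable_const_iff_isFiniteMeasure one_ne_zero).1
    (integrable_measureT (continuousOn_const (c := 1)))

theorem integrable_measureT_iff {f : ℝ → ℝ} :
    Integrable f measureT ↔ IntegrableOn (fun x ↦ f x / √(1 - x ^ 2)) (Ioo (-1) 1) := by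
  rw [measureT_eq_withDensity, integrable_withDensity_iff_integrable_smul₀ (by fun_prop)]
  refine integrable_congr (.of_forall fun x ↦ ?_)
  simp [NNReal.smul_def, div_eq_mul_inv, mul_comm]

theorem integral_measureT_eq_setIntegral (f : ℝ → ℝ) :
    ∫ x, f x ∂measureT = ∫ x in Ioo (-1) 1, f x / √(1 - x ^ 2) := by
  rw [integral_measureT, intervalIntegral.integral_of_le (by norm_num),
    integral_Ioc_eq_integral_Ioo]
  simp_rw [sqrt_inv, div_eq_mul_inv]

theorem integrableOn_div_sqrt_of_integrableOn_sq_div_sqrt {f : ℝ → ℝ}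
    (hf : AEStronglyMeasurable f (volume.restrict (Ioo (-1) 1)))
    (hf2 : IntegrableOn (fun x ↦ f x ^ 2 / √(1 - x ^ 2)) (Ioo (-1) 1)) :
    IntegrableOn (fun x ↦ f x / √(1 - x ^ 2)) (Ioo (-1) 1) := by
  have hf_meas : AEStronglyMeasurable f measureT :=
    hf.mono_ac (Measure.ae_le_iff_absolutelyContinuous.1 ae_measureT.le)
  rw [← integrable_measureT_iff] at hf2 ⊢
  exact ((memLp_two_iff_integrable_sq hf_meas).2 hf2).integrable one_le_two

theorem fourierCheb_eq_integral_measureT (f : ℝ → ℝ) (n : ℕ) :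
    fourierCheb f n = (if n = 0 then 1 else 2) / π * ∫ x, (T ℝ n).eval x * f x ∂measureT := by
  rw [integral_measureT_eq_setIntegral, fourierCheb]
  split_ifs with hn
  · simp [hn]
  · simp_rw [chebT, mul_comm]

theorem fourierCheb_congr_ae {f g : ℝ → ℝ} (hfg : ∀ᵐ x ∂measureT, f x = g x) :
    fourierCheb f = fourierCheb g := by
  ext n
  simp_rw [fourierCheb_eq_integral_measureT]
  rw [integral_congr_ae (hfg.mono fun x hx ↦ congrArg _ hx)]

theorem ae_eq_zero_of_forall_integral_eval_T_smul_eq_zero {E : Type*} [NormedAddCommGroup E]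
    [NormedSpace ℝ E] [CompleteSpace E] {μ : Measure ℝ} {a b : ℝ} {h : ℝ → E}
    (hμ : ∀ᵐ x ∂μ, x ∈ Icc a b) (hh : Integrable h μ)
    (hT : ∀ n : ℕ, ∫ x, (T ℝ n).eval x • h x ∂μ = 0) : ∀ᵐ x ∂μ, h x = 0 := by
  have h_int (p : ℝ[X]) : Integrable (fun x ↦ p.eval x • h x) μ :=
    integrable_smul_of_ae_mem_isCompact isCompact_Icc hμ p.continuous hh
  refine ae_eq_zero_of_forall_integral_eval_smul_eq_zero hμ hh fun p ↦ ?_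
  have hp : p ∈ Submodule.span ℝ (range fun n : ℕ ↦ T ℝ n) := by
    rw [span_range_T (isUnit_iff_ne_zero.2 (two_ne_zero' ℝ))]
    exact Submodule.mem_top
  induction hp using Submodule.span_induction with
  | mem p hp => obtain ⟨n, rfl⟩ := hp; exact hT n
  | zero => simp
  | add p q _ _ hp hq =>
    simp_rw [eval_add, add_smul]
    rw [integral_add (h_int p) (h_int q), hp, hq, add_zero]
  | smul c p _ hp =>
    simp_rw [eval_smul, smul_eq_mul, mul_smul]
    rw [integral_smul, hp, smul_zero]

theorem ae_eq_of_fourierCheb_eq {f g : ℝ → ℝ} (hf : Integrable f measureT)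
    (hg : Integrable g measureT) (hfg : fourierCheb f = fourierCheb g) :
    ∀ᵐ x ∂measureT, f x = g x := by
  have h_int {h : ℝ → ℝ} (hh : Integrable h measureT) (n : ℕ) :
      Integrable (fun x ↦ (T ℝ n).eval x * h x) measureT :=
    integrable_smul_of_ae_mem_isCompact isCompact_Icc ae_measureT_mem_Icc (T ℝ n).continuous hh
  have h_zero := ae_eq_zero_of_forall_integral_eval_T_smul_eq_zero ae_measureT_mem_Icc
    (hf.sub hg) fun n ↦ ?_
  · exact h_zero.mono fun x hx ↦ sub_eq_zero.1 hx
  · have hn := congrFun hfg n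
    rw [fourierCheb_eq_integral_measureT, fourierCheb_eq_integral_measureT] at hn
    simp_rw [Pi.sub_apply, smul_eq_mul, mul_sub]
    rw [integral_sub (h_int hf n) (h_int hg n), sub_eq_zero]
    exact mul_left_cancel₀ (by split_ifs <;> positivity) hn

theorem fourierCheb_T (m : ℕ) : fourierCheb (fun x ↦ (T ℝ m).eval x) = Pi.single m 1 := by
  ext n
  rw [fourierCheb_eq_integral_measureT]
  rcases eq_or_ne n m with rfl | hnm
  · rw [Pi.single_eq_same]
    split_ifs with hn
    · rw [hn, Nat.cast_zero, integral_eval_T_real_mul_self_measureT_zero]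
      field_simp
    · rw [integral_T_real_mul_self_measureT_of_ne_zero hn]
      field_simp
  · rw [integral_eval_T_real_mul_eval_T_real_measureT_of_ne hnm, mul_zero,
      Pi.single_eq_of_ne hnm]

theorem fourierCheb_tsum {a : ℕ → ℝ} (ha : Summable a) :
    fourierCheb (fun x ↦ ∑' n : ℕ, a n * (T ℝ n).eval x) = a := by
  ext m
  set F : ℕ → ℝ → ℝ := fun n x ↦ (T ℝ m).eval x * (a n * (T ℝ n).eval x)
  have hF (n : ℕ) : Integrable (F n) measureT := integrable_measureT (by fun_prop)
  have hF_le (n : ℕ) : ∫ x, ‖F n x‖ ∂measureT ≤ |a n| * measureT.real univ := by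
    calc ∫ x, ‖F n x‖ ∂measureT ≤ ∫ _, |a n| ∂measureT := by
          refine integral_mono_ae (hF n).norm (integrable_const _) ?_
          filter_upwards [ae_measureT_mem_Icc] with x hx
          have hT (k : ℕ) : |(T ℝ k).eval x| ≤ 1 := abs_eval_T_real_le_one k (abs_le.2 hx)
          calc ‖F n x‖ = |(T ℝ m).eval x| * (|a n| * |(T ℝ n).eval x|) := by
                rw [norm_eq_abs, abs_mul, abs_mul]
            _ ≤ 1 * (|a n| * 1) := by gcongr <;> exact hT _
            _ = |a n| := by ring
      _ = |a n| * measureT.real univ := by rw [integral_const, smul_eq_mul, mul_comm]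
  have hF_sum := hasSum_integral_of_summable_integral_norm hF <|
    .of_nonneg_of_le (fun n ↦ integral_nonneg fun _ ↦ norm_nonneg _) hF_le (ha.abs.mul_right _)
  have h_coeff (n : ℕ) : (if m = 0 then 1 else 2) / π * ∫ x, F n x ∂measureT =
      if n = m then a n else 0 := by
    simp_rw [F, mul_left_comm _ (a n)]
    rw [integral_const_mul, mul_left_comm, ← fourierCheb_eq_integral_measureT, fourierCheb_T,
      Pi.single_apply]
    simp [eq_comm]
  rw [fourierCheb_eq_integral_measureT]
  simp_rw [← tsum_mul_left]
  rw [← hF_sum.tsum_eq, ← tsum_mul_left]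
  simp_rw [h_coeff]
  simp

/-- The second-order operator `1 - L`, where `L = (1 - x ^ 2) ∂² - x ∂` is the Chebyshev operator:
`T ℝ n` is an eigenfunction with eigenvalue `1 + n ^ 2`. -/
noncomputable def oneSubChebyshevOp (g : ℝ → ℝ) (x : ℝ) : ℝ :=
  g x + x * deriv g x - (1 - x ^ 2) * deriv (deriv g) x

theorem contDiff_oneSubChebyshevOp {g : ℝ → ℝ} {n : WithTop ℕ∞} (hg : ContDiff ℝ (n + 2) g) :
    ContDiff ℝ n (oneSubChebyshevOp g) := by
  rw [← one_add_one_eq_two, ← add_assoc] at hg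
  exact (hg.of_le (le_self_add.trans le_self_add)).add
    (contDiff_id.mul (hg.deriv'.of_le le_self_add)) |>.sub
    ((contDiff_const.sub (contDiff_id.pow 2)).mul hg.deriv'.deriv')

theorem contDiff_iterate_oneSubChebyshevOp {g : ℝ → ℝ} (hg : ContDiff ℝ ∞ g) (k : ℕ) :
    ContDiff ℝ ∞ (oneSubChebyshevOp^[k] g) :=
  Function.Iterate.rec (ContDiff ℝ ∞) hg (fun _ hg ↦ contDiff_oneSubChebyshevOp hg) k

theorem one_add_sq_mul_integral_eval_T_mul {g : ℝ → ℝ} (hg : ContDiff ℝ 2 g) (n : ℤ) :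
    (1 + (n : ℝ) ^ 2) * ∫ x, (T ℝ n).eval x * g x ∂measureT =
      ∫ x, (T ℝ n).eval x * oneSubChebyshevOp g x ∂measureT := by
  have hg1 : ContDiff ℝ 1 (deriv g) := hg.deriv'
  have hg_deriv (x : ℝ) : HasDerivAt g (deriv g x) x := (hg.differentiable (by simp) x).hasDerivAt
  have hg1_deriv (x : ℝ) : HasDerivAt (deriv g) (deriv (deriv g) x) x :=
    (hg1.differentiable (by simp) x).hasDerivAt
  have hg_cont : Continuous g := hg.continuous
  have hop_cont : Continuous (oneSubChebyshevOp g) :=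
    (contDiff_oneSubChebyshevOp (n := 0) (by simpa using hg)).continuous
  have h_antideriv (θ : ℝ) :
      HasDerivAt (fun θ ↦ n * (sin (n * θ) * g (cos θ)) - cos (n * θ) * (sin θ * deriv g (cos θ)))
        ((1 + (n : ℝ) ^ 2) * (cos (n * θ) * g (cos θ)) -
          cos (n * θ) * oneSubChebyshevOp g (cos θ)) θ := by
    have h_mul : HasDerivAt (fun θ : ℝ ↦ n * θ) n θ := hasDerivAt_const_mul _
    have h_sin := h_mul.sin.mul ((hg_deriv (cos θ)).comp θ (hasDerivAt_cos θ))
    have h_cos := h_mul.cos.mul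
      ((hasDerivAt_sin θ).mul ((hg1_deriv (cos θ)).comp θ (hasDerivAt_cos θ)))
    refine ((h_sin.const_mul (n : ℝ)).sub h_cos).congr_deriv ?_
    simp only [Function.comp_apply, Pi.mul_apply, oneSubChebyshevOp]
    rw [← sin_sq]
    ring
  have h_int {u : ℝ → ℝ} (hu : Continuous u) : IntervalIntegrable u volume 0 π :=
    hu.intervalIntegrable 0 π
  rw [integral_measureT_eq_integral_cos, integral_measureT_eq_integral_cos, ← sub_eq_zero,
    ← intervalIntegral.integral_const_mul]
  simp_rw [T_real_cos]
  rw [← intervalIntegral.integral_sub (h_int (by fun_prop)) (h_int (by fun_prop)),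
    intervalIntegral.integral_eq_sub_of_hasDerivAt (fun θ _ ↦ h_antideriv θ)
      (h_int (by fun_prop))]
  simp

theorem fourierCheb_oneSubChebyshevOp {g : ℝ → ℝ} (hg : ContDiff ℝ 2 g) (n : ℕ) :
    fourierCheb (oneSubChebyshevOp g) n = (1 + (n : ℝ) ^ 2) * fourierCheb g n := by
  rw [fourierCheb_eq_integral_measureT, fourierCheb_eq_integral_measureT, mul_left_comm,
    ← one_add_sq_mul_integral_eval_T_mul hg, Int.cast_natCast]

theorem fourierCheb_iterate_oneSubChebyshevOp {g : ℝ → ℝ} (hg : ContDiff ℝ ∞ g) (k n : ℕ) :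
    fourierCheb (oneSubChebyshevOp^[k] g) n = (1 + (n : ℝ) ^ 2) ^ k * fourierCheb g n := by
  induction k with
  | zero => rw [pow_zero, one_mul, Function.iterate_zero_apply]
  | succ k ih =>
    have hgk : ContDiff ℝ 2 (oneSubChebyshevOp^[k] g) :=
      (contDiff_iterate_oneSubChebyshevOp hg k).of_le (by norm_cast)
    rw [Function.iterate_succ_apply', fourierCheb_oneSubChebyshevOp hgk, ih, ← mul_assoc,
      ← pow_succ']

theorem abs_fourierCheb_le {f : ℝ → ℝ} (hf : Integrable f measureT) (n : ℕ) :
    |fourierCheb f n| ≤ ∫ x, |f x| ∂measureT := by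
  have h_coeff : |(if n = 0 then 1 else 2) / π| ≤ 1 := by
    rw [abs_div, abs_of_pos pi_pos, div_le_one pi_pos]
    split_ifs
    · exact abs_one.trans_le (one_le_two.trans two_le_pi)
    · exact abs_two.trans_le two_le_pi
  have h_int : |∫ x, (T ℝ n).eval x * f x ∂measureT| ≤ ∫ x, |f x| ∂measureT := by
    rw [← norm_eq_abs]
    refine norm_integral_le_of_norm_le hf.abs ?_
    filter_upwards [ae_measureT_mem_Icc] with x hx
    rw [norm_mul]
    exact mul_le_of_le_one_left (abs_nonneg _) (abs_eval_T_real_le_one n (abs_le.2 hx))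
  rw [fourierCheb_eq_integral_measureT, abs_mul]
  exact (mul_le_of_le_one_left (abs_nonneg _) h_coeff).trans h_int

theorem summable_pow_mul_fourierCheb_sq_of_contDiff {g : ℝ → ℝ} (hg : ContDiff ℝ ∞ g) (s : ℕ) :
    Summable fun n : ℕ ↦ (1 + (n : ℝ) ^ 2) ^ s * fourierCheb g n ^ 2 := by
  refine summable_pow_mul_sq_of_forall_pow_mul_abs_le (fun n ↦ by positivity)
    summable_one_add_sq_sq_inv (fun k ↦ ⟨∫ x, |oneSubChebyshevOp^[k] g x| ∂measureT, fun n ↦ ?_⟩) s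
  have h_int : Integrable (oneSubChebyshevOp^[k] g) measureT :=
    integrable_measureT (contDiff_iterate_oneSubChebyshevOp hg k).continuous.continuousOn
  calc (1 + (n : ℝ) ^ 2) ^ k * |fourierCheb g n|
      = |fourierCheb (oneSubChebyshevOp^[k] g) n| := by
        rw [fourierCheb_iterate_oneSubChebyshevOp hg, abs_mul,
          abs_of_nonneg (a := (1 + (n : ℝ) ^ 2) ^ k) (by positivity)]
    _ ≤ ∫ x, |oneSubChebyshevOp^[k] g x| ∂measureT := abs_fourierCheb_le h_int n

theorem exists_contDiff_ae_eq_of_summable_fourierCheb {f : ℝ → ℝ} (hf : Integrable f measureT)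
    (hs : ∀ s : ℕ, Summable fun n : ℕ ↦ (1 + (n : ℝ) ^ 2) ^ s * fourierCheb f n ^ 2) :
    ∃ g : ℝ → ℝ, ContDiff ℝ ∞ g ∧ ∀ᵐ x ∂measureT, f x = g x := by
  have h_summable := summable_pow_mul_abs_of_forall_summable_pow_mul_sq
    (fun n ↦ by positivity) summable_one_add_sq_sq_inv hs
  have h_summable_coeff : Summable (fourierCheb f) :=
    .of_abs (by simpa only [pow_zero, one_mul] using h_summable 0)
  obtain ⟨g, hg, hg_eqOn⟩ := exists_contDiff_eqOn_tsum_T h_summable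
  have hg_coeff : fourierCheb g = fourierCheb f :=
    (fourierCheb_congr_ae (ae_measureT_mem_Icc.mono hg_eqOn)).trans
      (fourierCheb_tsum h_summable_coeff)
  exact ⟨g, hg, ae_eq_of_fourierCheb_eq hf
    (integrable_measureT hg.continuous.continuousOn) hg_coeff.symm⟩

end ChebyshevCoefficients

theorem Tinfty_eq_Cinfty_general (f : ℝ → ℝ)
    (hf : IntegrableOn (fun x ↦ f x / √(1 - x ^ 2)) (Ioo (-1) 1)) :
    (∀ s : ℕ, Summable fun n : ℕ ↦ (1 + (n : ℝ) ^ 2) ^ s * fourierCheb f n ^ 2) ↔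
      ∃ g : ℝ → ℝ, ContDiff ℝ (⊤ : ℕ∞) g ∧ ∀ᵐ x ∂(volume.restrict (Ioo (-1) 1)), f x = g x := by
  rw [← integrable_measureT_iff] at hf
  rw [← ae_measureT]
  constructor
  · exact exists_contDiff_ae_eq_of_summable_fourierCheb hf
  · rintro ⟨g, hg, hfg⟩ s
    rw [fourierCheb_congr_ae hfg]
    exact summable_pow_mul_fourierCheb_sq_of_contDiff hg s

/-- `T^∞ = C^∞([-1,1])`: a function in `L²_{1/ω}` has rapidly decaying
Fourier–Chebyshev coefficients iff it coincides a.e. on `(-1,1)` with a smooth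
function on `ℝ`. -/
theorem Tinfty_eq_Cinfty (f : ℝ → ℝ) (hmeas : Measurable f)
    (hL2 : IntegrableOn (fun x => f x ^ 2 / Real.sqrt (1 - x ^ 2)) (Ioo (-1 : ℝ) 1)) :
    (∀ s : ℕ, Summable (fun n : ℕ => (1 + (n : ℝ) ^ 2) ^ s * fourierCheb f n ^ 2)) ↔
    (∃ g : ℝ → ℝ, ContDiff ℝ (⊤ : ℕ∞) g ∧
      ∀ᵐ x ∂(volume.restrict (Ioo (-1 : ℝ) 1)), f x = g x) := by
  exact Tinfty_eq_Cinfty_general f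
    (integrableOn_div_sqrt_of_integrableOn_sq_div_sqrt hmeas.aestronglyMeasurable hL2)
end
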